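/- For all integers n and k with 2 ≤ k ≤ n, |DT_{n,k}| = |DT_{n-1,k-1}| + Σ_{j=k}^{n-1} 2^{j-k} · |DT_{n-1,j}|. -/

import Mathlib

/-!
Let `F a` be the generating function, by number of nodes, of the di-sk trees whose label sequence
starts with exactly `a` labels `⊕`, and let `G` be that of the di-sk trees whose root is not `⊕`
(the empty tree included). Two identities carry the proof.

* `F (a + 1) = X * F a * G` (`leadSeries_succ`). Every nonempty tree arises uniquely from a tree `t`
  by grafting a new leftmost node with some right subtree `R` at the bottom of the left spine
  (`DTree.graft`). If the new node is `⊕`, then `R` is empty or has the form `node ⊖ l r`. A pair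
  `(l, node ⊖ t r)` therefore encodes the tree obtained by grafting `⊕` with right subtree
  `node ⊖ l r` onto `t`, and `(l, nil)` the tree obtained by grafting a childless `⊕` onto `l`
  (`DTree.insertPlus`). In both cases `l` has exactly one leading `⊕` less than the result.
* `G = 1 + X * (2 * G - 1) * G` (`rootNeSeries_eq`), from deleting the root and the symmetry
  exchanging the two labels.

Together they give `F (a + 1) + X * F (a + 1) = 2 * F (a + 2) + X * F a`, a three-term recurrence
for the cardinalities, which is unrolled into the stated sum by induction on `n - k`.
-/

/-- A plane binary tree with nodes labeled by `Bool`
(`true` for `⊕` and `false` for `⊖`); `nil` is the empty tree,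
and each node has an optional left and right child (given by `nil` subtrees). -/
inductive DTree : Type
  | nil : DTree
  | node : Bool → DTree → DTree → DTree
  deriving DecidableEq

/-- The in-order label sequence of a labeled binary tree. -/
def DTree.labels : DTree → List Bool
  | .nil => []
  | .node b l r => l.labels ++ b :: r.labels

/-- The right-chain condition: no node has the same label as its right child. -/
def DTree.RightOk : DTree → Prop
  | .nil => True
  | .node b l r =>
      l.RightOk ∧ r.RightOk ∧
      (match r with
       | .nil => True
       | .node b' _ _ => b ≠ b')

/-- `IsDiSk t` : `t` is a di-sk tree. -/
def IsDiSk (t : DTree) : Prop := t.RightOk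

/-- Membership in `DT_{n,k}` : a di-sk tree with `n-1` nodes whose in-order label
sequence starts with `k-1` copies of `⊕` followed (when `k ≤ n-1`) by a `⊖`. -/
def MemDT (n k : ℕ) (t : DTree) : Prop :=
  IsDiSk t ∧ t.labels.length = n - 1 ∧
  (∀ i : ℕ, i < k - 1 → t.labels[i]? = some true) ∧
  (k ≤ n - 1 → t.labels[k-1]? = some false)

/-- The cardinality of `DT_{n,k}`. -/
noncomputable def DTcard (n k : ℕ) : ℕ := Nat.card {t : DTree // MemDT n k t}

namespace DTree

/-- The number of leading `true`s of a word. -/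
def lead : List Bool → ℕ
  | true :: w => lead w + 1
  | _ => 0

theorem lead_append_false (u v : List Bool) : lead (u ++ false :: v) = lead u := by
  induction u with
  | nil => rfl
  | cons b u ih => cases b <;> simp [lead, ih]

theorem lead_le_length (u : List Bool) : lead u ≤ u.length := by
  induction u with
  | nil => simp [lead]
  | cons b u ih => cases b <;> simp [lead, ih]

theorem lead_eq_iff (w : List Bool) (a : ℕ) (ha : a ≤ w.length) :
    lead w = a ↔ (∀ i : ℕ, i < a → w[i]? = some true) ∧
      (a + 1 ≤ w.length → w[a]? = some false) := by
  induction w generalizing a with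
  | nil =>
    obtain rfl : a = 0 := by simpa using ha
    simp [lead]
  | cons b w ih =>
    cases a with
    | zero => cases b <;> simp [lead]
    | succ a =>
      have ih := ih a (by simpa using ha)
      cases b
      · simp only [lead]
        constructor
        · intro h; omega
        · intro h
          have := h.1 0 (by omega)
          simp at this
      · simp only [lead, List.length_cons, List.getElem?_cons_succ, add_left_inj,
          add_le_add_iff_right]
        rw [ih]
        refine and_congr_left fun _ => ⟨fun h i hi => ?_, fun h i hi => ?_⟩
        · cases i with
          | zero => rfl
          | succ i => simpa using h i (by omega)
        · simpa using h (i + 1) (by omega)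

/-- The root, if there is one, is not labeled `b`. -/
def RootNe (b : Bool) : DTree → Prop
  | nil => True
  | node b' _ _ => b ≠ b'

theorem rightOk_node (b : Bool) (l r : DTree) :
    (node b l r).RightOk ↔ l.RightOk ∧ r.RightOk ∧ RootNe b r := by
  cases r <;> rfl

/-- The number of nodes. -/
abbrev size (t : DTree) : ℕ := t.labels.length

/-! ### Generating functions -/

theorem finite_size (m : ℕ) : {t : DTree | t.size = m}.Finite := by
  induction m using Nat.strong_induction_on with
  | _ m ih =>
    have hU : {t : DTree | t.size < m}.Finite := by
      have : {t : DTree | t.size < m} = ⋃ i ∈ Set.Iio m, {t : DTree | t.size = i} := by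
        ext t; simp
      rw [this]
      exact (Set.finite_Iio m).biUnion fun i hi => ih i hi
    refine ((Set.finite_singleton nil).union
      ((Set.finite_univ (α := Bool)).prod (hU.prod hU) |>.image
        fun p => node p.1 p.2.1 p.2.2)).subset ?_
    intro t ht
    cases t with
    | nil => simp
    | node b l r =>
      right
      refine ⟨(b, l, r), ?_, rfl⟩
      simp [size, labels] at ht ⊢
      omega

instance (P : DTree → Prop) (m : ℕ) : Finite {t : DTree // P t ∧ t.size = m} :=
  ((finite_size m).subset fun _ h => h.2).to_subtype

/-- The number of trees with `m` nodes that satisfy `P`. -/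
noncomputable def cnt (P : DTree → Prop) (m : ℕ) : ℕ := Nat.card {t : DTree // P t ∧ t.size = m}

/-- The generating function, by number of nodes, of the trees that satisfy `P`. -/
noncomputable def gf (P : DTree → Prop) : PowerSeries ℤ := PowerSeries.mk fun m => (cnt P m : ℤ)

theorem gf_congr {P Q : DTree → Prop} (h : ∀ t, P t ↔ Q t) : gf P = gf Q := by
  rw [show P = Q from funext fun t => propext (h t)]

theorem gf_or {P Q : DTree → Prop} (h : ∀ t, P t → ¬ Q t) :
    gf (fun t => P t ∨ Q t) = gf P + gf Q := by
  ext m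
  simp only [gf, cnt, PowerSeries.coeff_mk, map_add]
  have hf : ∀ R : DTree → Prop, {t : DTree | R t ∧ t.size = m}.Finite :=
    fun R => (finite_size m).subset fun _ h => h.2
  have h1 := Set.ncard_union_eq (s := {t : DTree | P t ∧ t.size = m})
    (t := {t : DTree | Q t ∧ t.size = m})
    (Set.disjoint_left.2 fun t ht ht' => h t ht.1 ht'.1) (hf P) (hf Q)
  have h2 : {t : DTree | P t ∧ t.size = m} ∪ {t : DTree | Q t ∧ t.size = m}
      = {t : DTree | (P t ∨ Q t) ∧ t.size = m} := by
    ext t; simp [or_and_right]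
  rw [h2] at h1
  exact_mod_cast h1

theorem gf_nil : gf (fun t => t = nil) = 1 := by
  ext m
  simp only [gf, cnt, PowerSeries.coeff_mk, PowerSeries.coeff_one]
  split_ifs with h
  · subst h
    have : Nat.card {t : DTree // t = nil ∧ t.size = 0} = 1 := by
      rw [Nat.card_eq_one_iff_exists]
      exact ⟨⟨nil, rfl, rfl⟩, fun t => Subtype.ext t.2.1⟩
    exact_mod_cast this
  · have : IsEmpty {t : DTree // t = nil ∧ t.size = m} :=
      ⟨fun t => h (by rw [← t.2.2, t.2.1]; rfl)⟩
    simp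

/-- A bijection `f` from pairs satisfying `P × Q` onto the trees satisfying `R` that adds one node
turns into the product formula `gf R = X * gf P * gf Q`. -/
theorem gf_mul {P Q R : DTree → Prop} (f : DTree → DTree → DTree)
    (hsize : ∀ l r, (f l r).size = l.size + r.size + 1)
    (hR : ∀ l r, P l → Q r → R (f l r))
    (hsurj : ∀ s, R s → ∃ l r, P l ∧ Q r ∧ f l r = s)
    (hinj : ∀ l r l' r', Q r → Q r' → f l r = f l' r' → l = l' ∧ r = r') :
    gf R = PowerSeries.X * gf P * gf Q := by
  ext m
  rw [mul_assoc]
  cases m with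
  | zero =>
    rw [PowerSeries.coeff_zero_X_mul]
    simp only [gf, cnt, PowerSeries.coeff_mk]
    have : IsEmpty {t : DTree // R t ∧ t.size = 0} := by
      refine ⟨fun t => ?_⟩
      obtain ⟨l, r, -, -, h⟩ := hsurj t.1 t.2.1
      have := hsize l r
      rw [h, t.2.2] at this
      omega
    exact_mod_cast Nat.card_of_isEmpty
  | succ m =>
    rw [PowerSeries.coeff_succ_X_mul, PowerSeries.coeff_mul]
    simp only [gf, cnt, PowerSeries.coeff_mk]
    let g : (Σ p : Finset.HasAntidiagonal.antidiagonal m, {l : DTree // P l ∧ l.size = p.1.1} ×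
        {r : DTree // Q r ∧ r.size = p.1.2}) → {t : DTree // R t ∧ t.size = m + 1} :=
      fun x => ⟨f x.2.1.1 x.2.2.1, hR _ _ x.2.1.2.1 x.2.2.2.1, by
        rw [hsize, x.2.1.2.2, x.2.2.2.2, Finset.HasAntidiagonal.mem_antidiagonal.1 x.1.2]⟩
    have hg : Function.Bijective g := by
      constructor
      · rintro ⟨⟨⟨i, j⟩, hp⟩, ⟨l, hl, hl'⟩, ⟨r, hr, hr'⟩⟩
          ⟨⟨⟨i', j'⟩, hp'⟩, ⟨l', hl1, hl1'⟩, ⟨r', hr1, hr1'⟩⟩ h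
        obtain ⟨rfl, rfl⟩ := hinj l r l' r' hr hr1 (congrArg Subtype.val h)
        dsimp only at hl' hl1' hr' hr1'
        subst hl' hr' hl1' hr1'
        rfl
      · rintro ⟨s, hs, hs'⟩
        obtain ⟨l, r, hl, hr, rfl⟩ := hsurj s hs
        rw [hsize] at hs'
        exact ⟨⟨⟨(l.size, r.size), by simpa using hs'⟩, ⟨l, hl, rfl⟩, ⟨r, hr, rfl⟩⟩, rfl⟩
    rw [← Nat.card_congr (Equiv.ofBijective g hg), Nat.card_sigma]
    simp only [Nat.card_prod]
    push_cast
    exact Finset.sum_coe_sort (Finset.HasAntidiagonal.antidiagonal m) fun p =>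
      (Nat.card {l : DTree // P l ∧ l.size = p.1} : ℤ) * Nat.card {r : DTree // Q r ∧ r.size = p.2}

/-! ### Exchanging the two labels -/

/-- Exchange `⊕` and `⊖` at every node. -/
def swap : DTree → DTree
  | nil => nil
  | node b l r => node (!b) l.swap r.swap

theorem swap_swap (t : DTree) : t.swap.swap = t := by
  induction t with
  | nil => rfl
  | node b l r hl hr => simp [swap, hl, hr]

theorem size_swap (t : DTree) : t.swap.size = t.size := by
  induction t with
  | nil => rfl
  | node b l r hl hr => simp only [size] at hl hr; simp [size, swap, labels, hl, hr]

theorem rootNe_swap (b : Bool) (t : DTree) : RootNe (!b) t.swap ↔ RootNe b t := by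
  cases t <;> simp [swap, RootNe]

theorem rightOk_swap (t : DTree) : t.swap.RightOk ↔ t.RightOk := by
  induction t with
  | nil => rfl
  | node b l r hl hr => rw [swap, rightOk_node, rightOk_node, hl, hr, rootNe_swap]

/-- The generating function of the di-sk trees that are empty or whose root is not `b`. -/
noncomputable def rootNeSeries (b : Bool) : PowerSeries ℤ := gf fun t => t.RightOk ∧ RootNe b t

theorem rootNeSeries_not (b : Bool) : rootNeSeries (!b) = rootNeSeries b := by
  ext m
  simp only [rootNeSeries, gf, cnt, PowerSeries.coeff_mk]
  congr 1
  have key : ∀ (c : Bool) (t : DTree), (t.RightOk ∧ RootNe c t) ∧ t.size = m →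
      (t.swap.RightOk ∧ RootNe (!c) t.swap) ∧ t.swap.size = m := fun c t h => by
    rwa [rightOk_swap, rootNe_swap, size_swap]
  exact Nat.card_congr
    { toFun := fun t => ⟨t.1.swap, by simpa using key (!b) t.1 t.2⟩
      invFun := fun t => ⟨t.1.swap, key b t.1 t.2⟩
      left_inv := fun t => Subtype.ext (swap_swap _)
      right_inv := fun t => Subtype.ext (swap_swap _) }

theorem gf_root (b : Bool) :
    gf (fun t => t.RightOk ∧ ∃ l r, t = node b l r) =
      PowerSeries.X * gf RightOk * rootNeSeries b := by
  refine gf_mul (node b) ?_ ?_ ?_ ?_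
  · intro l r; simp [size, labels]; omega
  · intro l r hl hr; exact ⟨(rightOk_node b l r).2 ⟨hl, hr⟩, l, r, rfl⟩
  · rintro s ⟨hs, l, r, rfl⟩
    have := (rightOk_node b l r).1 hs
    exact ⟨l, r, this.1, this.2, rfl⟩
  · intro l r l' r' _ _ h; simpa using h

theorem rootNeSeries_eq_one_add (b : Bool) :
    rootNeSeries b = 1 + gf (fun t => t.RightOk ∧ ∃ l r, t = node (!b) l r) := by
  rw [← gf_nil, ← gf_or]
  · refine gf_congr fun t => ?_
    cases t with
    | nil => simp [RootNe, RightOk]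
    | node c l r => cases b <;> cases c <;> simp [RootNe]
  · rintro t rfl; simp

theorem gf_rightOk :
    gf RightOk = 1 + gf (fun t => t.RightOk ∧ ∃ l r, t = node true l r) +
      gf (fun t => t.RightOk ∧ ∃ l r, t = node false l r) := by
  rw [← gf_nil, ← gf_or, ← gf_or]
  · refine gf_congr fun t => ?_
    cases t with
    | nil => simp [RightOk]
    | node c l r => cases c <;> simp
  · rintro t (rfl | ⟨-, l, r, rfl⟩) <;> simp
  · rintro t rfl; simp

/-- The quadratic equation of the generating function of the little Schröder numbers. -/
theorem rootNeSeries_eq :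
    rootNeSeries true =
      1 + PowerSeries.X * (2 * rootNeSeries true - 1) * rootNeSeries true := by
  have h1 := rootNeSeries_eq_one_add true
  have h2 := rootNeSeries_eq_one_add false
  have h3 := gf_root false
  have h4 := gf_rightOk
  have h5 : rootNeSeries false = rootNeSeries true := rootNeSeries_not true
  simp only [Bool.not_true, Bool.not_false] at h1 h2
  rw [h5] at h2 h3
  have h6 : gf RightOk = 2 * rootNeSeries true - 1 := by linear_combination h4 - h1 - h2
  rw [h6] at h3
  linear_combination h1 + h3

/-! ### Removing the leftmost node -/

/-- Attach a node labeled `b` with right subtree `R` at the bottom of the left spine of a tree,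
so that it becomes the first node in in-order. -/
def graft (b : Bool) (R : DTree) : DTree → DTree
  | nil => node b nil R
  | node c l r => node c (graft b R l) r

theorem labels_graft (b : Bool) (R t : DTree) :
    (graft b R t).labels = b :: (R.labels ++ t.labels) := by
  induction t with
  | nil => simp [graft, labels]
  | node c l r hl _ => simp [graft, labels, hl]

theorem rightOk_graft (b : Bool) (R t : DTree) :
    (graft b R t).RightOk ↔ t.RightOk ∧ R.RightOk ∧ RootNe b R := by
  induction t with
  | nil => simp [graft, rightOk_node, RightOk]
  | node c l r hl _ => rw [graft, rightOk_node, rightOk_node, hl]; tauto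

theorem graft_ne_nil (b : Bool) (R t : DTree) : graft b R t ≠ nil := by
  cases t <;> simp [graft]

theorem graft_inj (b : Bool) {R R' t t' : DTree} (h : graft b R t = graft b R' t') :
    R = R' ∧ t = t' := by
  induction t generalizing t' with
  | nil =>
    cases t' with
    | nil => simpa [graft] using h
    | node c l r =>
      simp only [graft, node.injEq] at h
      exact absurd h.2.1.symm (graft_ne_nil _ _ _)
  | node c l r hl _ =>
    cases t' with
    | nil =>
      simp only [graft, node.injEq] at h
      exact absurd h.2.1 (graft_ne_nil _ _ _)
    | node c' l' r' =>
      simp only [graft, node.injEq] at h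
      obtain ⟨rfl, h, rfl⟩ := h
      obtain ⟨rfl, rfl⟩ := hl h
      exact ⟨rfl, rfl⟩

theorem exists_graft (t : DTree) (ht : t ≠ nil) : ∃ b R s, graft b R s = t := by
  induction t with
  | nil => exact absurd rfl ht
  | node c l r hl _ =>
    by_cases h : l = nil
    · subst h; exact ⟨c, r, nil, rfl⟩
    · obtain ⟨b, R, s, rfl⟩ := hl h
      exact ⟨b, R, node c s r, rfl⟩

/-- The bijection behind `leadSeries_succ`: insert a new first node `⊕` into `l`, with the second
argument, empty or with root `⊖`, recording the right subtree of the new node and the rest of the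
tree. -/
def insertPlus (l : DTree) : DTree → DTree
  | nil => graft true nil l
  | node b t r => graft true (node b l r) t

/-- The generating function of the di-sk trees with exactly `a` leading labels `⊕`. -/
noncomputable def leadSeries (a : ℕ) : PowerSeries ℤ := gf fun t => t.RightOk ∧ lead t.labels = a

theorem leadSeries_succ (a : ℕ) :
    leadSeries (a + 1) = PowerSeries.X * leadSeries a * rootNeSeries true := by
  refine gf_mul insertPlus ?_ ?_ ?_ ?_
  · intro l s
    cases s <;> simp [size, insertPlus, labels_graft, labels]
    omega
  · rintro l s ⟨hl, rfl⟩ ⟨hs, hs'⟩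
    cases s with
    | nil => simp [insertPlus, rightOk_graft, labels_graft, labels, lead, hl, RightOk, RootNe]
    | node b t r =>
      cases b
      · rw [rightOk_node] at hs
        refine ⟨?_, by simp [insertPlus, labels_graft, labels, lead, lead_append_false]⟩
        rw [insertPlus, rightOk_graft, rightOk_node]
        exact ⟨hs.1, ⟨hl, hs.2⟩, hs'⟩
      · exact absurd rfl hs'
  · rintro s ⟨hs, hs'⟩
    have hne : s ≠ nil := by rintro rfl; simp [labels, lead] at hs'
    obtain ⟨b, R, t, rfl⟩ := exists_graft s hne
    rw [rightOk_graft] at hs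
    rw [labels_graft] at hs'
    obtain ⟨ht, hR, hR'⟩ := hs
    cases b
    · simp [lead] at hs'
    · cases R with
      | nil =>
        refine ⟨t, nil, ⟨ht, ?_⟩, ⟨trivial, trivial⟩, rfl⟩
        simpa [lead, labels] using hs'
      | node c l r =>
        cases c
        · rw [rightOk_node] at hR
          refine ⟨l, node false t r, ⟨hR.1, ?_⟩, ⟨?_, ?_⟩, rfl⟩
          · simpa [lead, labels, lead_append_false] using hs'
          · rw [rightOk_node]; exact ⟨ht, hR.2⟩
          · simp [RootNe]
        · exact absurd rfl hR'
  · rintro l s l' s' ⟨-, hs⟩ ⟨-, hs'⟩ h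
    cases s <;> cases s' <;> simp only [insertPlus] at h <;> have := graft_inj _ h <;>
      simp_all

/-! ### The recurrence for the cardinalities -/

/-- The number of di-sk trees with `m` nodes and exactly `a` leading labels `⊕`. -/
noncomputable def leadCount (m a : ℕ) : ℕ := cnt (fun t => t.RightOk ∧ lead t.labels = a) m

theorem leadCount_rec (m a : ℕ) :
    leadCount (m + 1) (a + 1) + leadCount m (a + 1) =
      2 * leadCount (m + 1) (a + 2) + leadCount m a := by
  have h : leadSeries (a + 1) + PowerSeries.X * leadSeries (a + 1) =
      leadSeries (a + 2) + leadSeries (a + 2) + PowerSeries.X * leadSeries a := by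
    rw [leadSeries_succ (a + 1), leadSeries_succ a]
    linear_combination (PowerSeries.X * leadSeries a) * rootNeSeries_eq
  have h := congrArg (PowerSeries.coeff (m + 1)) h
  simp only [map_add, PowerSeries.coeff_succ_X_mul] at h
  simp only [leadSeries, gf, PowerSeries.coeff_mk] at h
  unfold leadCount
  omega

theorem leadCount_eq_zero {m a : ℕ} (h : m < a) : leadCount m a = 0 := by
  have : IsEmpty {t : DTree // (t.RightOk ∧ lead t.labels = a) ∧ t.size = m} := by
    refine ⟨fun t => ?_⟩
    have h1 := lead_le_length t.1.labels
    have h2 : t.1.labels.length = m := t.2.2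
    rw [t.2.1.2] at h1
    omega
  simp [leadCount, cnt]

theorem leadCount_sum (d a : ℕ) :
    leadCount (a + d + 1) (a + 1) = leadCount (a + d) a +
      ∑ i ∈ Finset.range d, 2 ^ i * leadCount (a + d) (a + 1 + i) := by
  induction d generalizing a with
  | zero =>
    have h := leadCount_rec a a
    rw [leadCount_eq_zero (m := a) (a := a + 1) (by omega),
      leadCount_eq_zero (m := a + 1) (a := a + 2) (by omega)] at h
    simpa using h
  | succ d ih =>
    have h := leadCount_rec (a + (d + 1)) a
    have ih := ih (a + 1)
    rw [show a + 1 + d = a + (d + 1) by omega] at ih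
    rw [ih] at h
    rw [Finset.sum_range_succ']
    have hs : ∑ i ∈ Finset.range d, 2 ^ (i + 1) * leadCount (a + (d + 1)) (a + 1 + (i + 1)) =
        2 * ∑ i ∈ Finset.range d, 2 ^ i * leadCount (a + (d + 1)) (a + 1 + 1 + i) := by
      rw [Finset.mul_sum]
      refine Finset.sum_congr rfl fun i _ => ?_
      rw [show a + 1 + (i + 1) = a + 1 + 1 + i by omega]
      ring
    rw [hs]
    simp only [pow_zero, one_mul, add_zero]
    omega

/-- For `k ≤ n` the conditions of `MemDT (n + 1) (k + 1)` say that there are `n` nodes and exactly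
`k` leading labels `⊕`. -/
theorem DTcard_succ (n k : ℕ) (h : k ≤ n) : DTcard (n + 1) (k + 1) = leadCount n k := by
  refine Nat.card_congr (Equiv.subtypeEquivRight fun t => ?_)
  simp only [MemDT, IsDiSk, Nat.add_sub_cancel, size]
  constructor
  · rintro ⟨h1, h2, h3⟩
    refine ⟨⟨h1, (lead_eq_iff _ _ (by omega)).2 ?_⟩, h2⟩
    rwa [h2]
  · rintro ⟨⟨h1, h2⟩, h3⟩
    refine ⟨h1, h3, ?_⟩
    have := (lead_eq_iff _ _ (by omega)).1 h2
    rwa [h3] at this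

end DTree

/-- For all integers `2 ≤ k ≤ n`,
`|DT_{n,k}| = |DT_{n-1,k-1}| + Σ_{j=k}^{n-1} 2^{j-k} ⬝ |DT_{n-1,j}|`. -/
theorem stmt12 (n k : ℕ) (hk : 2 ≤ k) (hkn : k ≤ n) :
    DTcard n k = DTcard (n - 1) (k - 1) +
      ∑ j ∈ Finset.Ico k n, 2 ^ (j - k) * DTcard (n - 1) j := by
  obtain ⟨a, rfl⟩ : ∃ a, k = a + 2 := ⟨k - 2, by omega⟩
  obtain ⟨d, rfl⟩ : ∃ d, n = a + d + 2 := ⟨n - (a + 2), by omega⟩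
  rw [show a + d + 2 - 1 = a + d + 1 by omega, show a + 2 - 1 = a + 1 by omega,
    DTree.DTcard_succ (a + d + 1) (a + 1) (by omega), DTree.DTcard_succ (a + d) a (by omega),
    DTree.leadCount_sum, Finset.sum_Ico_eq_sum_range,
    show a + d + 2 - (a + 2) = d by omega]
  congr 1
  refine Finset.sum_congr rfl fun i hi => ?_
  have hi := Finset.mem_range.1 hi
  rw [show a + 2 + i - (a + 2) = i by omega, show a + 2 + i = a + 1 + i + 1 by omega,
    DTree.DTcard_succ (a + d) (a + 1 + i) (by omega)]
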